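/- Let K = ℚ(X, T) be the field of rational functions in two variables X, T over ℚ, set L = X², and for natural numbers N ≥ 1, ν ≥ 1 define G(N,ν) = (L−1)·T^N / (L^ν − T^N) ∈ K. Define Z_A = ( (L−1)·(L−1)/(X−1) + (L−1)/(X−1) )·G(6,5) + ((L−1)/(X−1))·G(12,10)·G(6,5) and Z_B = ( L−1 + (L+1)·(L−1)/(X−1) )·G(12,10) + ((L−1)/(X−1))·G(12,10)·G(6,5). Then Z_A − Z_B = X·(X+1)·( X·G(6,5) − (X+1)·G(12,10) ), and in particular Z_A ≠ Z_B. -/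

import Mathlib

/-! The field `K = ℚ(X, T)` of rational functions in two variables, realized as
`RatFunc (RatFunc ℚ)`: `X` is the constant `RatFunc.X` of the inner field and
`T` is the variable of the outer field. -/

/-- The variable `X` of `K = ℚ(X, T)`. -/
noncomputable def Xv : RatFunc (RatFunc ℚ) := RatFunc.C RatFunc.X

/-- The variable `T` of `K = ℚ(X, T)`. -/
noncomputable def Tv : RatFunc (RatFunc ℚ) := RatFunc.X

/-- `L = X²`. -/
noncomputable def Lv : RatFunc (RatFunc ℚ) := Xv ^ 2

/-- `G(N,ν) = (L−1)·T^N / (L^ν − T^N)`, the rational-function image of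
`(𝕃−1)/(𝕃^{Ns+ν}−1)` under `𝕃 = X²`, `T = 𝕃^{−s}`. -/
noncomputable def G (N ν : ℕ) : RatFunc (RatFunc ℚ) :=
  (Lv - 1) * Tv ^ N / (Lv ^ ν - Tv ^ N)

/-- The relevant contribution `Z_A(s)` on the dlt modification `X_A`. -/
noncomputable def ZA : RatFunc (RatFunc ℚ) :=
  ((Lv - 1) * (Lv - 1) / (Xv - 1) + (Lv - 1) / (Xv - 1)) * G 6 5
    + (Lv - 1) / (Xv - 1) * G 12 10 * G 6 5

/-- The relevant contribution `Z_B(s)` on the dlt modification `X_B`. -/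
noncomputable def ZB : RatFunc (RatFunc ℚ) :=
  (Lv - 1 + (Lv + 1) * (Lv - 1) / (Xv - 1)) * G 12 10
    + (Lv - 1) / (Xv - 1) * G 12 10 * G 6 5

/-! Since `X ≠ 1`, the quotient `(L - 1) / (X - 1)` is `X + 1`, and the difference formula is a
polynomial identity in `X`, `G 6 5` and `G 12 10`. Factoring
`L ^ 10 - T ^ 12 = (L ^ 5 - T ^ 6) * (L ^ 5 + T ^ 6)`, the vanishing of `Z_A - Z_B` reduces to
`X * (L ^ 5 + T ^ 6) = (X + 1) * T ^ 6`, that is `T ^ 6 = X ^ 11`. This is impossible because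
`T ^ 6` is not a constant over `ℚ(X)`, which also keeps all denominators nonzero. -/

theorem Tv_pow_six_ne_C (c : RatFunc ℚ) : Tv ^ 6 ≠ RatFunc.C c := by
  intro h
  have h' : (Polynomial.X ^ 6 : Polynomial (RatFunc ℚ)) = Polynomial.C c := by
    apply RatFunc.algebraMap_injective (RatFunc ℚ)
    rw [map_pow, RatFunc.algebraMap_X, RatFunc.algebraMap_C]
    exact h
  have h6 := congrArg Polynomial.natDegree h'
  simp at h6

theorem Xv_ne_C_rat (q : ℚ) : Xv ≠ RatFunc.C (RatFunc.C q) := by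
  intro h
  have h1 : (RatFunc.X : RatFunc ℚ) = RatFunc.C q := RatFunc.C_injective h
  have h2 : (Polynomial.X : Polynomial ℚ) = Polynomial.C q := by
    apply RatFunc.algebraMap_injective ℚ
    rw [RatFunc.algebraMap_X, RatFunc.algebraMap_C]
    exact h1
  exact Polynomial.X_ne_C q h2

/-- The two dlt motivic zeta functions computed on dlt modifications connected by a
flop differ: `Z_A − Z_B = X·(X+1)·(X·G(6,5) − (X+1)·G(12,10)) ≠ 0`. -/
theorem flop_counterexample :
    ZA - ZB = Xv * (Xv + 1) * (Xv * G 6 5 - (Xv + 1) * G 12 10) ∧ ZA ≠ ZB := by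
  have hX0 : Xv ≠ 0 := by simpa using Xv_ne_C_rat 0
  have hX1 : Xv - 1 ≠ 0 := sub_ne_zero.mpr (by simpa using Xv_ne_C_rat 1)
  have hXm : Xv + 1 ≠ 0 := by
    intro h
    exact Xv_ne_C_rat (-1) (by simpa using eq_neg_of_add_eq_zero_left h)
  have hq : (Lv - 1) / (Xv - 1) = Xv + 1 := by
    rw [div_eq_iff hX1, Lv]
    ring
  have key : ZA - ZB = Xv * (Xv + 1) * (Xv * G 6 5 - (Xv + 1) * G 12 10) := by
    rw [ZA, ZB, mul_div_assoc, mul_div_assoc, hq, Lv]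
    ring
  refine ⟨key, fun hAB => ?_⟩
  have hT0 : Tv ≠ 0 := RatFunc.X_ne_zero
  have hL1 : Lv - 1 ≠ 0 := by
    have : Lv - 1 = (Xv - 1) * (Xv + 1) := by rw [Lv]; ring
    rw [this]
    exact mul_ne_zero hX1 hXm
  have hm : Lv ^ 5 - Tv ^ 6 ≠ 0 := by
    intro h
    apply Tv_pow_six_ne_C (RatFunc.X ^ 10)
    rw [map_pow, ← Xv, ← sub_eq_zero.mp h, Lv]
    ring
  have hp : Lv ^ 5 + Tv ^ 6 ≠ 0 := by
    intro h
    apply Tv_pow_six_ne_C (-RatFunc.X ^ 10)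
    rw [map_neg, map_pow, ← Xv, eq_neg_of_add_eq_zero_right h, Lv]
    ring
  have hfac : Lv ^ 10 - Tv ^ 12 = (Lv ^ 5 - Tv ^ 6) * (Lv ^ 5 + Tv ^ 6) := by ring
  -- Over the common denominator `L ^ 10 - T ^ 12` the numerator collapses.
  have hdiff : Xv * G 6 5 - (Xv + 1) * G 12 10 =
      (Lv - 1) * Tv ^ 6 * (Xv ^ 11 - Tv ^ 6) /
        ((Lv ^ 5 - Tv ^ 6) * (Lv ^ 5 + Tv ^ 6)) := by
    have hXL : Xv ^ 11 = Xv * Lv ^ 5 := by rw [Lv]; ring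
    rw [G, G, hfac, hXL]
    field_simp
    ring
  have hne : Xv ^ 11 - Tv ^ 6 ≠ 0 := by
    intro h
    apply Tv_pow_six_ne_C (RatFunc.X ^ 11)
    rw [map_pow, ← Xv, sub_eq_zero.mp h]
  rw [hAB, sub_self, hdiff] at key
  exact mul_ne_zero (mul_ne_zero hX0 hXm)
    (div_ne_zero (mul_ne_zero (mul_ne_zero hL1 (pow_ne_zero 6 hT0)) hne)
      (mul_ne_zero hm hp)) key.symm
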